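/- Let (Δ, π) be a balanced simplicial complex of dimension d−1 over a field k. If the Stanley-Reisner ring k[Δ] satisfies Serre's condition (S_ℓ), then k[Δ_S] satisfies (S_ℓ) for every subset S ⊆ [d], where Δ_S is the S-rank selected subcomplex of Δ. -/

import Mathlib

open Finset

/-- An abstract simplicial complex on vertex type `V`, given by a finite, downward closed
family of finite subsets of `V` (its faces). -/
structure SComplex (V : Type) [DecidableEq V] where
  faces : Finset (Finset V)
  down_closed : ∀ ⦃s t : Finset V⦄, s ∈ faces → t ⊆ s → t ∈ faces

namespace SComplex

variable {V : Type} [DecidableEq V]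

/-- `K.rank = d = dim k[Δ] = dim Δ + 1` is the maximal cardinality of a face of `K`. -/
def rank (K : SComplex V) : ℕ := K.faces.sup Finset.card

/-- `F` is a facet (maximal face) of `K`. -/
def IsFacet (K : SComplex V) (F : Finset V) : Prop :=
  F ∈ K.faces ∧ ∀ G ∈ K.faces, F ⊆ G → F = G

/-- `K` is pure: all facets have the maximal cardinality `K.rank`. -/
def Pure (K : SComplex V) : Prop := ∀ F : Finset V, K.IsFacet F → F.card = K.rank

/-- The link `lk_K(T) = {G ∈ K | T ∪ G ∈ K, T ∩ G = ∅}`. -/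
def link (K : SComplex V) (T : Finset V) : SComplex V where
  faces := K.faces.filter fun G => Disjoint T G ∧ T ∪ G ∈ K.faces
  down_closed := by
    intro s t hs hts
    simp only [Finset.mem_filter] at hs ⊢
    exact ⟨K.down_closed hs.1 hts, hs.2.1.mono_right hts,
      K.down_closed hs.2.2 (Finset.union_subset_union_right hts)⟩

/-- The anti-star `ast_K(T) = {G ∈ K | T ∩ G = ∅}`. -/
def antistar (K : SComplex V) (T : Finset V) : SComplex V where
  faces := K.faces.filter fun G => Disjoint T G
  down_closed := by
    intro s t hs hts
    simp only [Finset.mem_filter] at hs ⊢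
    exact ⟨K.down_closed hs.1 hts, hs.2.mono_right hts⟩

/-- The induced subcomplex of `K` on a set `W` of vertices. -/
def restrict (K : SComplex V) (W : Finset V) : SComplex V where
  faces := K.faces.filter fun G => G ⊆ W
  down_closed := by
    intro s t hs hts
    simp only [Finset.mem_filter] at hs ⊢
    exact ⟨K.down_closed hs.1 hts, hts.trans hs.2⟩

/-- The subcomplex of faces of cardinality at most `m`; as cardinality = dimension + 1, this is
the `(m-1)`-skeleton `Δ^{(m-1)}`. -/
def skelCard (K : SComplex V) (m : ℕ) : SComplex V where
  faces := K.faces.filter fun G => G.card ≤ m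
  down_closed := by
    intro s t hs hts
    simp only [Finset.mem_filter] at hs ⊢
    exact ⟨K.down_closed hs.1 hts, le_trans (Finset.card_le_card hts) hs.2⟩

/-- `K.trunc j` is `[Δ]_{>j}`, the order complex of the poset of faces of `K` of cardinality
(equivalently, of height in the face poset) `> j`: its faces are the chains of such faces.
For `j = 0` this is the barycentric subdivision of `K`. -/
def trunc (K : SComplex V) (j : ℕ) : SComplex (Finset V) where
  faces := K.faces.powerset.filter fun C =>
    (∀ s ∈ C, j < s.card) ∧ ∀ s ∈ C, ∀ t ∈ C, s ⊆ t ∨ t ⊆ s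
  down_closed := by
    intro s t hs hts
    simp only [Finset.mem_powerset, Finset.mem_filter] at hs ⊢
    exact ⟨hts.trans hs.1, fun a ha => hs.2.1 a (hts ha),
      fun a ha b hb => hs.2.2 a (hts ha) b (hts hb)⟩

/-- `Δ_A`: the complex obtained from `K` by deleting all faces containing a member of `A`. -/
def deleteAbove (K : SComplex V) (A : Finset (Finset V)) : SComplex V where
  faces := K.faces.filter fun s => ∀ τ ∈ A, ¬ τ ⊆ s
  down_closed := by
    intro s t hs hts
    simp only [Finset.mem_filter] at hs ⊢
    exact ⟨K.down_closed hs.1 hts, fun τ hτ hsub => hs.2 τ hτ (hsub.trans hts)⟩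

/-- The number of faces of `K` of cardinality `i`, i.e. the face number `f_{i-1}(K)`. -/
def faceCount (K : SComplex V) (i : ℕ) : ℕ := (K.faces.filter fun s => s.card = i).card

/-- The Euler characteristic `χ(K) = Σ_{i ≥ 0} (-1)^i f_i(K)`. -/
def eulerChar (K : SComplex V) : ℤ :=
  ∑ s ∈ K.faces.filter (fun s => s ≠ ∅), (-1 : ℤ) ^ (s.card - 1)

/-- The reduced Euler characteristic `χ̃(K) = χ(K) - 1`. -/
def reducedEulerChar (K : SComplex V) : ℤ := eulerChar K - 1

end SComplex

/-! ### Simplicial homology with coefficients in a field `k` -/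

/-- An arbitrary linear order on a finite type. -/
noncomputable def arbOrder (V : Type) [Fintype V] : LinearOrder V :=
  LinearOrder.lift' (Fintype.equivFin V) (Equiv.injective _)

namespace SComplex

variable {V : Type} [DecidableEq V]

/-- The faces of `K` of cardinality `n`, as a type. -/
def Faces (K : SComplex V) (n : ℕ) : Type :=
  {s : Finset V // s ∈ K.faces ∧ s.card = n}

/-- The space of reduced simplicial `n`-chains of `K`: formal `k`-linear combinations of the
faces of cardinality `n` (such a face has dimension `n - 1`; the empty face sits in degree `0`,
which produces *reduced* homology). -/
abbrev ChainsOf (k : Type) [Field k] (K : SComplex V) (n : ℕ) : Type := Faces K n →₀ k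

variable (k : Type) [Field k] [Fintype V]

/-- The simplicial boundary map, with signs determined by an arbitrary but fixed linear order
on the vertices. -/
noncomputable def bd (K : SComplex V) (n : ℕ) :
    ChainsOf k K n →ₗ[k] ChainsOf k K (n - 1) :=
  letI : LinearOrder V := arbOrder V
  Finsupp.lsum k fun s : Faces K n =>
    LinearMap.toSpanSingleton k (ChainsOf k K (n - 1))
      (∑ x ∈ s.1.attach,
        ((-1 : k) ^ (s.1.filter (fun y => y < x.1)).card) •
          Finsupp.single
            (⟨s.1.erase x.1,
              K.down_closed s.2.1 (Finset.erase_subset _ _),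
              by rw [Finset.card_erase_of_mem x.2, s.2.2]⟩ : Faces K (n - 1))
            (1 : k))

/-- `HVanish k K i` says that the reduced simplicial homology `H̃_{i-1}(K; k)` vanishes.
Note the indexing convention: the index `i` is the *cardinality* of the relevant faces, so this
is reduced homology in topological degree `i - 1`; e.g. `HVanish k K 1` says `H̃₀(K; k) = 0`
(`K` is connected and nonempty) and `HVanish k K 0` says `H̃₋₁(K; k) = 0` (`K` has a face).
Since the cycles in degree `i - 1` are `ker ∂ᵢ` and the boundaries are `im ∂ᵢ₊₁`, and the
boundaries are always contained in the cycles, vanishing of homology says exactly that every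
cycle is a boundary. -/
def HVanish (K : SComplex V) (i : ℕ) : Prop :=
  LinearMap.ker (bd k K i) ≤ LinearMap.range (bd k K (i + 1))

/-- `redHomologyRank k K i` is the dimension `dim_k H̃_{i-1}(K; k)` of the reduced simplicial
homology of `K` in topological degree `i - 1` (cardinality index `i`), namely the dimension of
the cycles `ker ∂ᵢ` modulo the boundaries `im ∂ᵢ₊₁`. -/
noncomputable def redHomologyRank (K : SComplex V) (i : ℕ) : ℕ :=
  Module.finrank k ↥(LinearMap.ker (bd k K i)) -
    Module.finrank k ↥(LinearMap.range (bd k K (i + 1)) ⊓ LinearMap.ker (bd k K i))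

end SComplex

/-! ### Depth, Serre conditions, and Stanley–Reisner rings -/

/-- The length of a longest regular sequence on `R` contained in the ideal `I`
(the `I`-depth of `R`). -/
noncomputable def depthIn (R : Type) [CommRing R] (I : Ideal R) : ℕ :=
  sSup {n : ℕ | ∃ rs : List R, rs.length = n ∧ (∀ r ∈ rs, r ∈ I) ∧
    RingTheory.Sequence.IsRegular R rs}

/-- Serre's condition `(S_ℓ)` for a commutative ring:
`depth R_p ≥ min {ℓ, dim R_p}` for every prime `p`. -/
def SerreCondS (ℓ : ℕ) (R : Type) [CommRing R] : Prop :=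
  ∀ (p : Ideal R) (hp : p.IsPrime),
    haveI := hp
    min ((ℓ : ℕ∞) : WithBot ℕ∞) (ringKrullDim (Localization.AtPrime p)) ≤
      ((depthIn (Localization.AtPrime p)
        (IsLocalRing.maximalIdeal (Localization.AtPrime p)) : ℕ∞) : WithBot ℕ∞)

namespace SComplex

variable {V : Type} [DecidableEq V] (k : Type) [Field k]

/-- The Stanley–Reisner ideal of `K`: generated by the squarefree monomials supported on
non-faces. -/
noncomputable def srIdeal (K : SComplex V) : Ideal (MvPolynomial V k) :=
  Ideal.span ((fun s : Finset V => ∏ v ∈ s, MvPolynomial.X v) '' {s : Finset V | s ∉ K.faces})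

/-- The Stanley–Reisner ring `k[Δ]`. -/
noncomputable abbrev SRRing (K : SComplex V) : Type := MvPolynomial V k ⧸ srIdeal k K

/-- `depth k[Δ]`: the depth of the Stanley–Reisner ring with respect to its irrelevant
(graded maximal) ideal. -/
noncomputable def srDepth (K : SComplex V) : ℕ :=
  depthIn (SRRing k K)
    (Ideal.span (Set.range fun v : V => Ideal.Quotient.mk (srIdeal k K) (MvPolynomial.X v)))

/-- `k[Δ]` satisfies Serre's condition `(S_ℓ)`. -/
def SerreS (ℓ : ℕ) (K : SComplex V) : Prop := SerreCondS ℓ (SRRing k K)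

end SComplex

/-! ### Order complexes of finite posets -/

/-- The order complex `O(P)` of a finite poset: its faces are the chains of `P`. -/
def orderComplex (P : Type) [DecidableEq P] [Fintype P] [PartialOrder P]
    [∀ a b : P, Decidable (a ≤ b)] : SComplex P where
  faces := Finset.univ.filter fun C : Finset P => ∀ a ∈ C, ∀ b ∈ C, a ≤ b ∨ b ≤ a
  down_closed := by
    intro s t hs hts
    simp only [Finset.mem_filter, Finset.mem_univ, true_and] at hs ⊢
    exact fun a ha b hb => hs a (hts ha) b (hts hb)

/-- The height of an element of a finite poset: the maximal cardinality of a chain with top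
element `p` (so minimal elements have height `1`). -/
def pheight {P : Type} [DecidableEq P] [Fintype P] [PartialOrder P]
    [∀ a b : P, Decidable (a ≤ b)] (p : P) : ℕ :=
  Finset.sup (Finset.univ.filter fun C : Finset P =>
    p ∈ C ∧ (∀ a ∈ C, a ≤ p) ∧ ∀ a ∈ C, ∀ b ∈ C, a ≤ b ∨ b ≤ a) Finset.card

/-- The height `ht P` of a finite poset: the maximal cardinality of a chain. -/
def pheightMax (P : Type) [DecidableEq P] [Fintype P] [PartialOrder P]
    [∀ a b : P, Decidable (a ≤ b)] : ℕ :=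
  Finset.univ.sup (pheight (P := P))

/-- `O(P_{>j})`: the full subcomplex of the order complex on the elements of height `> j`. -/
def ocAbove (P : Type) [DecidableEq P] [Fintype P] [PartialOrder P]
    [∀ a b : P, Decidable (a ≤ b)] (j : ℕ) : SComplex P :=
  (orderComplex P).restrict (Finset.univ.filter fun p => j < pheight p)

/-- The face poset `F(Δ)` of a simplicial complex: the nonempty faces, ordered by inclusion. -/
abbrev SComplex.FacePoset {V : Type} [DecidableEq V] (K : SComplex V) : Type :=
  {s : Finset V // s ∈ K.faces ∧ s ≠ ∅}

instance {V : Type} [DecidableEq V] (K : SComplex V) :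
    ∀ a b : K.FacePoset, Decidable (a ≤ b) := fun a b =>
  decidable_of_iff (a.1 ≤ b.1) Subtype.coe_le_coe

/-!
The inclusion `B → R` of `B = k[Δ_S]` into `R = k[Δ]` is split by the homomorphism killing the
remaining variables, which makes `B` a direct summand of the `B`-module `R`. Let `𝔭` be a prime of
`B` of height at least `n`, for some `n ≤ ℓ`. Every prime of `R` whose contraction contains `𝔭` has
height at least `n` as soon as `ht (𝔓 ∩ B) ≤ ht 𝔓` for all primes `𝔓` of `R`. By `(S_ℓ)` and prime
avoidance in `B`, there is then an `R`-regular sequence of length `n` inside `𝔭`; it is `B`-regular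
because `B` is a summand.

The height inequality can be checked on the polynomial rings of suitable facets, where it is going
down for flat maps, provided that all facets of `Δ` have the same number of vertices with colors
in `S`. This holds if `Δ` is balanced and pure, and `(S_2)` implies purity by Hartshorne's
connectedness theorem. For `ℓ ≤ 1` the condition `(S_ℓ)` is automatic, as `k[Δ]` is reduced.
-/

open RingTheory.Sequence IsLocalRing CategoryTheory Abelian
open scoped TensorProduct Pointwise

universe u v w

/-- `depth M ≥ n`: there is a weakly `M`-regular sequence of length `n` in the maximal ideal of the
local ring `A`. Weak regularity makes the zero module have infinite depth. -/
def DepthGE (A : Type u) [CommRing A] [IsLocalRing A] (n : ℕ) (M : Type v) [AddCommGroup M]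
    [Module A M] : Prop :=
  ∃ rs : List A, rs.length = n ∧ (∀ r ∈ rs, r ∈ maximalIdeal A) ∧ IsWeaklyRegular M rs

section Depth

variable {A : Type u} [CommRing A] [IsLocalRing A] {n : ℕ}

theorem depthGE_zero (M : Type v) [AddCommGroup M] [Module A M] : DepthGE A 0 M :=
  ⟨[], rfl, by simp, IsWeaklyRegular.nil A M⟩

theorem depthGE_of_subsingleton (n : ℕ) (M : Type v) [AddCommGroup M] [Module A M]
    [Subsingleton M] : DepthGE A n M := by
  refine ⟨List.replicate n 0, List.length_replicate, fun r hr => ?_, ⟨fun i h a b _ => ?_⟩⟩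
  · rw [List.eq_of_mem_replicate hr]
    exact Ideal.zero_mem _
  · exact Subsingleton.elim a b

theorem DepthGE.congr {M : Type v} {N : Type w} [AddCommGroup M] [Module A M] [AddCommGroup N]
    [Module A N] (e : M ≃ₗ[A] N) (h : DepthGE A n M) : DepthGE A n N := by
  obtain ⟨rs, hlen, hmem, hreg⟩ := h
  exact ⟨rs, hlen, hmem, (e.isWeaklyRegular_congr rs).mp hreg⟩

variable [IsNoetherianRing A]

theorem depthGE_iff_ext {M : Type u} [AddCommGroup M] [Module A M] [Module.Finite A M] :
    DepthGE A n M ↔ ∀ i < n, Subsingleton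
      (Ext (ModuleCat.of A (A ⧸ maximalIdeal A)) (ModuleCat.of A M) i) := by
  rcases subsingleton_or_nontrivial M with hM | hM
  · have hzero : Limits.IsZero (ModuleCat.of A M) := ModuleCat.isZero_of_subsingleton _
    refine iff_of_true (depthGE_of_subsingleton n M) fun i _ => ⟨fun a b => ?_⟩
    rw [← Ext.comp_mk₀_id a, ← Ext.comp_mk₀_id b, hzero.eq_of_src (𝟙 _) 0]
    simp only [Ext.mk₀_zero, Ext.comp_zero]
  · have hlt : maximalIdeal A • (⊤ : Submodule A M) < ⊤ :=
      (Submodule.top_ne_ideal_smul_of_le_jacobson_annihilator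
        (maximalIdeal_le_jacobson _)).symm.lt_top
    have hsupp : Module.support A (A ⧸ maximalIdeal A) =
        PrimeSpectrum.zeroLocus (maximalIdeal A) := by
      rw [Module.support_eq_zeroLocus, Ideal.annihilator_quotient]
    constructor
    · rintro ⟨rs, rfl, hmem, hreg⟩
      exact ModuleCat.subsingleton_ext_of_exists_isRegular (maximalIdeal A)
        (ModuleCat.of A (A ⧸ maximalIdeal A)) hsupp.le (ModuleCat.of A M) hlt rs hmem
        (IsRegular.of_isWeaklyRegular_of_mem_maximalIdeal M hmem hreg)
    · intro h
      obtain ⟨rs, hlen, hmem, hreg⟩ := ModuleCat.exists_isRegular_of_exists_subsingleton_ext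
        (maximalIdeal A) n (ModuleCat.of A M) hlt (ModuleCat.of A (A ⧸ maximalIdeal A)) hsupp h
      exact ⟨rs, hlen, hmem, hreg.toIsWeaklyRegular⟩

/-- By the long exact `Ext` sequence of `0 → M → M → M / xM → 0`. -/
theorem DepthGE.quotSMulTop {M : Type u} [AddCommGroup M] [Module A M] [Module.Finite A M]
    {x : A} (hx : IsSMulRegular M x) (h : DepthGE A (n + 1) M) :
    DepthGE A n (QuotSMulTop x M) := by
  rw [depthGE_iff_ext] at h ⊢
  intro i hi
  have hzero := AddCommGrpCat.isZero_of_iff_subsingleton.mpr (h i (by lia))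
  have hzero' := AddCommGrpCat.isZero_of_iff_subsingleton.mpr (h (i + 1) (by lia))
  exact AddCommGrpCat.subsingleton_of_isZero <| ShortComplex.Exact.isZero_of_both_zeros
    (Ext.covariant_sequence_exact₃' _
      (IsSMulRegular.smulShortComplex_shortExact (M := ModuleCat.of A M) hx) i (i + 1) rfl)
    (hzero.eq_zero_of_src _) (hzero'.eq_zero_of_tgt _)

theorem depthGE_one_of_isReduced [IsReduced A] (h : maximalIdeal A ≠ ⊥) : DepthGE A 1 A := by
  suffices ∃ x ∈ maximalIdeal A, x ∈ nonZeroDivisors A by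
    obtain ⟨x, hx, hreg⟩ := this
    exact ⟨[x], rfl, by simpa using hx, (isWeaklyRegular_singleton_iff A x).mpr
      (isSMulRegular_iff_right_eq_zero_of_smul.mpr fun y hy =>
        (mem_nonZeroDivisors_iff_left.mp hreg) y hy)⟩
  by_contra! hcon
  obtain ⟨-, a, ha, ha0⟩ := SetLike.lt_iff_le_and_exists.mp
    (Ideal.bot_lt_annihilator_of_disjoint_nonZeroDivisors (Set.disjoint_left.mpr hcon))
  have hann : ∀ y ∈ maximalIdeal A, a * y = 0 := Submodule.mem_annihilator.mp ha
  by_cases ham : a ∈ maximalIdeal A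
  · exact ha0 (IsReduced.eq_zero a ⟨2, by rw [sq, hann a ham]⟩)
  · have hunit : IsUnit a := by simpa using ham
    exact h ((Submodule.eq_bot_iff _).mpr fun y hy => hunit.mul_right_eq_zero.mp (hann y hy))

end Depth

section DepthIn

variable {A : Type} [CommRing A] [IsLocalRing A] {n : ℕ}

theorem length_le_height_maximalIdeal [IsNoetherianRing A] {rs : List A} (h : IsRegular A rs) :
    (rs.length : ℕ∞) ≤ (maximalIdeal A).height := by
  have hnontrivial : Nontrivial (A ⧸ Ideal.ofList rs) :=
    Ideal.Quotient.nontrivial_iff.mpr fun htop => h.top_ne_smul (by simp [htop])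
  have hdim : (rs.length : WithBot ℕ∞) ≤ ringKrullDim A := by
    rw [← ringKrullDim_add_length_eq_ringKrullDim_of_isRegular rs h]
    exact le_add_of_nonneg_left ringKrullDim_nonneg_of_nontrivial
  rw [← maximalIdeal_height_eq_ringKrullDim] at hdim
  exact_mod_cast hdim

theorem bddAbove_length_isRegular [IsNoetherianRing A] :
    BddAbove {n : ℕ | ∃ rs : List A, rs.length = n ∧ (∀ r ∈ rs, r ∈ maximalIdeal A) ∧
      IsRegular A rs} := by
  obtain ⟨d, hd⟩ := ENat.ne_top_iff_exists.mp
    (Ideal.height_ne_top (maximalIdeal.isMaximal A).ne_top)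
  refine ⟨d, ?_⟩
  rintro _ ⟨rs, rfl, -, hreg⟩
  exact_mod_cast hd ▸ length_le_height_maximalIdeal hreg

theorem depthGE_iff_le_depthIn [IsNoetherianRing A] :
    DepthGE A n A ↔ n ≤ depthIn A (maximalIdeal A) := by
  constructor
  · rintro ⟨rs, hlen, hmem, hreg⟩
    exact le_csSup bddAbove_length_isRegular
      ⟨rs, hlen, hmem, IsRegular.of_isWeaklyRegular_of_mem_maximalIdeal A hmem hreg⟩
  · intro h
    obtain ⟨rs, hlen, hmem, hreg⟩ := Nat.sSup_mem (s := {n : ℕ | ∃ rs : List A, rs.length = n ∧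
      (∀ r ∈ rs, r ∈ maximalIdeal A) ∧ IsRegular A rs})
      ⟨0, [], rfl, by simp, IsRegular.nil A A⟩ bddAbove_length_isRegular
    have htake : IsWeaklyRegular A (rs.take n ++ rs.drop n) := by
      rw [List.take_append_drop]
      exact hreg.toIsWeaklyRegular
    exact ⟨rs.take n, by rw [List.length_take, hlen]; exact min_eq_left h,
      fun r hr => hmem r (List.mem_of_mem_take hr), ((isWeaklyRegular_append_iff _ _ _).mp htake).1⟩

end DepthIn

section SerreCondition

variable {R : Type} [CommRing R] [IsNoetherianRing R] {ℓ : ℕ}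

theorem serreCondS_iff_depthGE :
    SerreCondS ℓ R ↔ ∀ (p : Ideal R) [p.IsPrime] (n : ℕ), n ≤ ℓ → (n : ℕ∞) ≤ p.height →
      DepthGE (Localization.AtPrime p) n (Localization.AtPrime p) := by
  refine forall_congr' fun p => forall_congr' fun hp => ?_
  simp only [IsLocalization.AtPrime.ringKrullDim_eq_height p, depthGE_iff_le_depthIn,
    ← WithBot.coe_min, WithBot.coe_le_coe]
  rw [← ENat.forall_natCast_le_iff_le]
  simp only [le_min_iff, Nat.cast_le, and_imp]

theorem serreCondS_of_isReduced [IsReduced R] (hℓ : ℓ ≤ 1) : SerreCondS ℓ R := by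
  rw [serreCondS_iff_depthGE]
  intro p hp n hn hnp
  obtain rfl | rfl := Nat.le_one_iff_eq_zero_or_eq_one.mp (hn.trans hℓ)
  · exact depthGE_zero _
  · refine depthGE_one_of_isReduced fun hbot => ?_
    have hdim := ringKrullDim_eq_zero_of_isField (isField_iff_maximalIdeal_eq.mpr hbot)
    rw [IsLocalization.AtPrime.ringKrullDim_eq_height p] at hdim
    have hzero : p.height = 0 := by exact_mod_cast hdim
    simp [hzero] at hnp

end SerreCondition

section Descent

theorem exists_mem_isSMulRegular {B R M : Type*} [CommRing B] [CommRing R] [IsNoetherianRing R]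
    [Algebra B R] [AddCommGroup M] [Module R M] [Module.Finite R M] {I : Ideal B}
    (h : ∀ P ∈ associatedPrimes R M, ¬ I ≤ P.comap (algebraMap B R)) :
    ∃ b ∈ I, IsSMulRegular M (algebraMap B R b) := by
  by_contra! hcon
  obtain ⟨P, hP, hIP⟩ := (I.subset_union_prime_finite (associatedPrimes.finite R M)
    (f := fun P : Ideal R => P.comap (algebraMap B R)) ⊥ ⊥
    fun P hP _ _ => have := IsAssociatedPrime.isPrime hP; Ideal.comap_isPrime _ P).mp fun b hb => by
      have hzero : algebraMap B R b ∈ ⋃ P ∈ associatedPrimes R M, (P : Set R) := by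
        rw [biUnion_associatedPrimes_eq_compl_regular]
        exact hcon b hb
      simpa using hzero
  exact h P hP hIP

variable {R M : Type u} [CommRing R] [IsNoetherianRing R] [AddCommGroup M] [Module R M]

theorem DepthGE.notMem_associatedPrimes {P : Ideal R} [P.IsPrime] {n : ℕ}
    (h : DepthGE (Localization.AtPrime P) (n + 1) (Localization.AtPrime P ⊗[R] M)) :
    P ∉ associatedPrimes R M := by
  intro hP
  obtain ⟨rs, hlen, hmem, hreg⟩ := h
  obtain ⟨a, rs, rfl⟩ := List.exists_cons_of_length_eq_add_one hlen
  have hass : maximalIdeal (Localization.AtPrime P) ∈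
      associatedPrimes (Localization.AtPrime P) (Localization.AtPrime P ⊗[R] M) :=
    Module.associatedPrimes.mem_associatedPrimes_of_comap_mem_associatedPrimes_of_isLocalizedModule
      P.primeCompl (TensorProduct.mk R (Localization.AtPrime P) M 1) _
      (by rwa [← Ideal.under_def, Localization.AtPrime.under_maximalIdeal])
  exact (biUnion_associatedPrimes_eq_compl_regular (Localization.AtPrime P)
    (Localization.AtPrime P ⊗[R] M)).subset (Set.mem_biUnion hass (hmem a List.mem_cons_self))
    ((isWeaklyRegular_cons_iff _ _ _).mp hreg).1

theorem DepthGE.localized_quotSMulTop [Module.Finite R M] {P : Ideal R} [P.IsPrime] {n : ℕ} {x : R}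
    (hx : IsSMulRegular M x)
    (h : DepthGE (Localization.AtPrime P) (n + 1) (Localization.AtPrime P ⊗[R] M)) :
    DepthGE (Localization.AtPrime P) n (Localization.AtPrime P ⊗[R] QuotSMulTop x M) :=
  (h.quotSMulTop (hx.of_flat_of_isBaseChange (TensorProduct.isBaseChange R M _))).congr
    (QuotSMulTop.algebraMapTensorEquivTensorQuotSMulTop x M (Localization.AtPrime P))

/-- Depth sensitivity of grade, with the regular sequence taken in a subring: prime avoidance is
applied in `B` to the contractions of the associated primes. -/
theorem exists_isWeaklyRegular_of_forall_depthGE {B : Type*} [CommRing B] [Algebra B R]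
    [Module.Finite R M] {I : Ideal B} {n : ℕ}
    (h : ∀ (P : Ideal R) [P.IsPrime], I ≤ P.comap (algebraMap B R) →
      DepthGE (Localization.AtPrime P) n (Localization.AtPrime P ⊗[R] M)) :
    ∃ bs : List B, bs.length = n ∧ (∀ b ∈ bs, b ∈ I) ∧
      IsWeaklyRegular M (bs.map (algebraMap B R)) := by
  induction n generalizing M with
  | zero => exact ⟨[], rfl, by simp, IsWeaklyRegular.nil R M⟩
  | succ n ih =>
    obtain ⟨b, hbI, hb⟩ := exists_mem_isSMulRegular (M := M) (I := I) fun P hP hIP =>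
      have := IsAssociatedPrime.isPrime hP
      (h P hIP).notMem_associatedPrimes hP
    obtain ⟨bs, hlen, hmem, hbs⟩ := ih fun P _ hIP => (h P hIP).localized_quotSMulTop hb
    exact ⟨b :: bs, by rw [List.length_cons, hlen], List.forall_mem_cons.mpr ⟨hbI, hmem⟩,
      (isWeaklyRegular_cons_iff _ _ _).mpr ⟨hb, hbs⟩⟩

theorem isWeaklyRegular_of_retract {B M N : Type*} [CommRing B] [AddCommGroup M] [Module B M]
    [AddCommGroup N] [Module B N] {bs : List B} (h : IsWeaklyRegular M bs) (i : N →ₗ[B] M)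
    (r : M →ₗ[B] N) (hri : r ∘ₗ i = LinearMap.id) : IsWeaklyRegular N bs := by
  induction bs generalizing M N with
  | nil => exact IsWeaklyRegular.nil B N
  | cons b bs ih =>
    rw [isWeaklyRegular_cons_iff] at h ⊢
    have hi : Function.Injective i :=
      Function.LeftInverse.injective (LinearMap.congr_fun hri)
    refine ⟨IsSMulRegular.of_injective i hi h.1, ih h.2 (QuotSMulTop.map b i)
      (QuotSMulTop.map b r) ?_⟩
    rw [← QuotSMulTop.map_comp, hri, QuotSMulTop.map_id]

theorem SerreCondS.of_retract {ℓ : ℕ} {B R : Type} [CommRing B] [CommRing R] [IsNoetherianRing B]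
    [IsNoetherianRing R] [Algebra B R] (r : R →ₗ[B] B)
    (hr : r ∘ₗ Algebra.linearMap B R = LinearMap.id)
    (hheight : ∀ (P : Ideal R) [P.IsPrime], (P.comap (algebraMap B R)).height ≤ P.height)
    (h : SerreCondS ℓ R) : SerreCondS ℓ B := by
  rw [serreCondS_iff_depthGE] at h ⊢
  intro p hp n hn hnp
  obtain ⟨bs, hlen, hmem, hbs⟩ := exists_isWeaklyRegular_of_forall_depthGE (M := R) (I := p)
    fun P _ hpP => (h P n hn <| hnp.trans <| (Ideal.height_mono hpP).trans (hheight P)).congr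
      (TensorProduct.AlgebraTensorModule.rid R (Localization.AtPrime P) _).symm
  rw [isWeaklyRegular_map_algebraMap_iff] at hbs
  exact ⟨bs.map (algebraMap B _), by simpa using hlen,
    List.forall_mem_map.mpr fun b hb =>
      (IsLocalization.AtPrime.to_map_mem_maximal_iff _ p b).mpr (hmem b hb),
    (isWeaklyRegular_of_retract hbs _ r hr).of_isLocalization _ p.primeCompl⟩

end Descent

section Height

variable {R S : Type*} [CommRing R] [CommRing S]

theorem height_le_height_comap_of_surjective {f : R →+* S} (hf : Function.Surjective f)
    (Q : Ideal S) [hQ : Q.IsPrime] : Q.height ≤ (Q.comap f).height := by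
  have hle := Order.height_le_height_apply_of_strictMono _
    (RingHom.strictMono_comap_of_surjective hf) ⟨Q, hQ⟩
  rwa [← PrimeSpectrum.height_eq_orderHeight, ← PrimeSpectrum.height_eq_orderHeight] at hle

theorem height_comap_le_of_flat [IsNoetherianRing R] [IsNoetherianRing S] {f : R →+* S}
    (hf : f.Flat) (Q : Ideal S) [Q.IsPrime] : (Q.comap f).height ≤ Q.height := by
  algebraize [f]
  rw [Ideal.height_eq_height_add_of_liesOver_of_hasGoingDown (Q.comap (algebraMap R S)) Q]
  exact le_self_add

theorem comap_lt_comap_of_surjective_mk_comp {f : S →+* R} {I P Q : Ideal R}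
    (hf : Function.Surjective ((Ideal.Quotient.mk I).comp f)) (hIP : I ≤ P) (hPQ : P < Q) :
    P.comap f < Q.comap f := by
  refine lt_of_le_not_ge (Ideal.comap_mono hPQ.le) fun hle => hPQ.not_ge fun x hx => ?_
  obtain ⟨y, hy⟩ := hf (Ideal.Quotient.mk I x)
  have hyx : f y - x ∈ I := Ideal.Quotient.eq.mp hy
  have hyP : f y ∈ P := hle ((Q.sub_mem_iff_left hx).mp (hPQ.le (hIP hyx)))
  exact (P.sub_mem_iff_right hyP).mp (hIP hyx)

theorem exists_isPrime_le_forall_height_le_height_comap [IsNoetherianRing R] (P : Ideal R)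
    [P.IsPrime] : ∃ Q : Ideal R, Q.IsPrime ∧ Q ≤ P ∧ ∀ {S : Type w} [CommRing S] (f : S →+* R),
      Function.Surjective ((Ideal.Quotient.mk Q).comp f) → P.height ≤ (P.comap f).height := by
  obtain ⟨s, hs, hlen⟩ := P.exists_ltSeries_length_eq_height
  have hle : s.head ≤ ⟨P, inferInstance⟩ := hs ▸ s.head_le_last
  refine ⟨s.head.asIdeal, s.head.isPrime, hle, fun {S} _ f hf => ?_⟩
  let t : LTSeries (PrimeSpectrum S) := ⟨s.length, fun i => PrimeSpectrum.comap f (s i),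
    fun i => comap_lt_comap_of_surjective_mk_comp hf (s.head_le _) (s.step i)⟩
  have ht : t.last.asIdeal = P.comap f := congrArg (fun Q => Q.asIdeal.comap f) hs
  rw [← hlen, ← ht, PrimeSpectrum.height_eq_orderHeight]
  exact Order.length_le_height_last (p := t)

theorem flat_rename {σ τ : Type*} {e : σ → τ} (he : Function.Injective e) :
    RingHom.Flat (MvPolynomial.rename e : MvPolynomial σ R →ₐ[R] MvPolynomial τ R).toRingHom := by
  classical
  let g : ((Set.range e)ᶜ : Set τ) ⊕ σ ≃ τ :=
    ((Equiv.refl _).sumCongr (Equiv.ofInjective e he)).trans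
      ((Equiv.sumComm _ _).trans (Equiv.Set.sumCompl _))
  let E := (MvPolynomial.sumAlgEquiv R ((Set.range e)ᶜ : Set τ) σ).symm.trans
    (MvPolynomial.renameEquiv R g)
  -- Up to the isomorphism `E`, `rename e` adjoins the variables outside the range of `e`.
  have hE : (MvPolynomial.rename e : MvPolynomial σ R →ₐ[R] MvPolynomial τ R).toRingHom =
      E.toRingEquiv.toRingHom.comp (algebraMap (MvPolynomial σ R) _) := by
    refine MvPolynomial.ringHom_ext (fun r => ?_) fun i => ?_
    · simp [E, MvPolynomial.algebraMap_eq]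
    · simp [E, g, MvPolynomial.algebraMap_eq]
  rw [hE]
  exact RingHom.Flat.comp (RingHom.flat_algebraMap_iff.mpr inferInstance)
    (RingHom.Flat.of_bijective E.bijective)

end Height

section Monomial

variable {σ : Type*}

theorem prod_X_eq_monomial_indicator {R : Type*} [CommSemiring R] (s : Finset σ) :
    (∏ i ∈ s, MvPolynomial.X i : MvPolynomial σ R) =
      MvPolynomial.monomial (Finsupp.indicator s fun _ _ => 1) 1 := by
  rw [Finsupp.indicator_eq_sum_single, MvPolynomial.monomial_sum_one]
  rfl

theorem indicator_one_le_iff {s : Finset σ} {m : σ →₀ ℕ} :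
    (Finsupp.indicator s fun _ _ => 1) ≤ m ↔ s ⊆ m.support := by
  classical
  refine forall_congr' fun i => ?_
  by_cases hi : i ∈ s <;> simp [hi, Nat.one_le_iff_ne_zero]

end Monomial

namespace SComplex

variable {V : Type} [DecidableEq V] {k : Type} [Field k] {K : SComplex V}

theorem exists_isFacet_superset {F : Finset V} (hF : F ∈ K.faces) : ∃ G, K.IsFacet G ∧ F ⊆ G := by
  obtain ⟨G, hFG, hG⟩ := K.faces.exists_le_maximal hF
  exact ⟨G, ⟨hG.prop, fun H hH hGH => hG.eq_of_le hH hGH⟩, hFG⟩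

variable (k K) in
/-- The class of a variable in the Stanley–Reisner ring. -/
noncomputable def srX (v : V) : SRRing k K := Ideal.Quotient.mk (srIdeal k K) (MvPolynomial.X v)

theorem prod_srX_eq_zero {s : Finset V} (hs : s ∉ K.faces) : ∏ v ∈ s, srX k K v = 0 := by
  simp only [srX, ← map_prod]
  exact Ideal.Quotient.eq_zero_iff_mem.mpr (Ideal.subset_span ⟨s, hs, rfl⟩)

theorem srX_eq_zero {v : V} (hv : {v} ∉ K.faces) : srX k K v = 0 := by
  simpa only [prod_singleton] using prod_srX_eq_zero (k := k) hv

theorem mem_srIdeal_iff {f : MvPolynomial V k} :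
    f ∈ srIdeal k K ↔ ∀ m ∈ f.support, m.support ∉ K.faces := by
  simp only [srIdeal, prod_X_eq_monomial_indicator]
  rw [← Set.image_image (fun m => MvPolynomial.monomial m (1 : k)),
    MvPolynomial.mem_ideal_span_monomial_image]
  simp only [Set.exists_mem_image, Set.mem_ofPred_eq, indicator_one_le_iff]
  exact forall₂_congr fun m _ =>
    ⟨fun ⟨_, hs, hsm⟩ hm => hs (K.down_closed hm hsm), fun hm => ⟨_, hm, subset_rfl⟩⟩

section Generators

variable {T : Type*} [CommRing T] [Algebra k T]

@[elab_as_elim]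
theorem srRing_induction {motive : SRRing k K → Prop} (r : SRRing k K)
    (algebraMap : ∀ a : k, motive (algebraMap k _ a))
    (add : ∀ a b, motive a → motive b → motive (a + b))
    (mul_srX : ∀ a v, motive a → motive (a * srX k K v)) : motive r := by
  obtain ⟨f, rfl⟩ := Ideal.Quotient.mk_surjective r
  induction f using MvPolynomial.induction_on with
  | C a => exact algebraMap a
  | add p q hp hq => exact add _ _ hp hq
  | mul_X p v hp => exact mul_srX _ _ hp

theorem srRing_algHom_ext {f g : SRRing k K →ₐ[k] T} (h : ∀ v, f (srX k K v) = g (srX k K v)) :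
    f = g :=
  Ideal.Quotient.algHom_ext k (MvPolynomial.algHom_ext h)

/-- The algebra homomorphism out of a Stanley–Reisner ring given by values of the variables whose
products over the non-faces vanish. -/
noncomputable def srLift (f : V → T) (hf : ∀ s ∉ K.faces, ∏ v ∈ s, f v = 0) :
    SRRing k K →ₐ[k] T :=
  Ideal.Quotient.liftₐ (srIdeal k K) (MvPolynomial.aeval f) fun a ha => by
    have hle : srIdeal k K ≤ RingHom.ker (MvPolynomial.aeval (R := k) f) := by
      rw [srIdeal, Ideal.span_le]
      rintro _ ⟨s, hs, rfl⟩
      simpa only [SetLike.mem_coe, RingHom.mem_ker, map_prod, MvPolynomial.aeval_X] using hf s hs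
    exact hle ha

@[simp]
theorem srLift_srX (f : V → T) (hf : ∀ s ∉ K.faces, ∏ v ∈ s, f v = 0) (v : V) :
    srLift (k := k) f hf (srX k K v) = f v :=
  MvPolynomial.aeval_X f v

theorem adjoin_range_srX : Algebra.adjoin k (Set.range (srX k K)) = ⊤ := by
  refine eq_top_iff.mpr fun r _ => ?_
  induction r using srRing_induction with
  | algebraMap a => exact Subalgebra.algebraMap_mem _ a
  | add a b ha hb => exact Subalgebra.add_mem _ (ha trivial) (hb trivial)
  | mul_srX a v ha =>
    exact Subalgebra.mul_mem _ (ha trivial) (Algebra.subset_adjoin (Set.mem_range_self v))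

theorem finite_range_srX : (Set.range (srX k K)).Finite := by
  refine (((K.faces.biUnion id).finite_toSet.image (srX k K)).insert 0).subset ?_
  rintro _ ⟨v, rfl⟩
  by_cases hv : {v} ∈ K.faces
  · exact Or.inr ⟨v, mem_biUnion.mpr ⟨{v}, hv, mem_singleton_self v⟩, rfl⟩
  · exact Or.inl (srX_eq_zero hv)

instance : IsNoetherianRing (SRRing k K) :=
  have : Algebra.FiniteType k (SRRing k K) :=
    ⟨Subalgebra.fg_def.mpr ⟨_, finite_range_srX, adjoin_range_srX⟩⟩
  Algebra.FiniteType.isNoetherianRing k _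

end Generators

section Face

variable {G : Finset V}

variable (k) in
/-- The surjection `k[Δ] → k[x_v : v ∈ G]` onto the polynomial ring of a face `G`, killing the
variables outside of `G`. -/
noncomputable def faceHom (hG : G ∈ K.faces) : SRRing k K →ₐ[k] MvPolynomial G k :=
  srLift (fun v => MvPolynomial.killCompl Subtype.val_injective (MvPolynomial.X v)) fun s hs => by
    obtain ⟨v, hvs, hvG⟩ := not_subset.mp fun hsG : s ⊆ G => hs (K.down_closed hG hsG)
    exact prod_eq_zero hvs (by simpa [MvPolynomial.killCompl] using hvG)

theorem faceHom_srX (hG : G ∈ K.faces) (v : V) : faceHom k hG (srX k K v) =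
    MvPolynomial.killCompl Subtype.val_injective (MvPolynomial.X v) :=
  srLift_srX _ _ v

theorem faceHom_mk (hG : G ∈ K.faces) (f : MvPolynomial V k) :
    faceHom k hG (Ideal.Quotient.mk _ f) = MvPolynomial.killCompl Subtype.val_injective f :=
  AlgHom.congr_fun (φ₁ := (faceHom k hG).comp (Ideal.Quotient.mkₐ k (srIdeal k K)))
    (MvPolynomial.algHom_ext (faceHom_srX hG)) f

theorem faceHom_srX_of_mem (hG : G ∈ K.faces) {v : V} (hv : v ∈ G) :
    faceHom k hG (srX k K v) = MvPolynomial.X ⟨v, hv⟩ := by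
  rw [faceHom_srX, ← MvPolynomial.killCompl_rename_app Subtype.val_injective
    (MvPolynomial.X ⟨v, hv⟩), MvPolynomial.rename_X]

theorem faceHom_srX_of_notMem (hG : G ∈ K.faces) {v : V} (hv : v ∉ G) :
    faceHom k hG (srX k K v) = 0 := by
  rw [faceHom_srX]
  simpa [MvPolynomial.killCompl] using hv

theorem eq_zero_of_forall_faceHom_eq_zero {r : SRRing k K}
    (h : ∀ G (hG : K.IsFacet G), faceHom k hG.1 r = 0) : r = 0 := by
  obtain ⟨f, rfl⟩ := Ideal.Quotient.mk_surjective r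
  rw [Ideal.Quotient.eq_zero_iff_mem, mem_srIdeal_iff]
  intro m hm hface
  obtain ⟨G, hG, hmG⟩ := exists_isFacet_superset hface
  have hrange : (m.support : Set V) ⊆ Set.range (Subtype.val : G → V) := by
    rwa [Subtype.range_coe, coe_subset]
  refine MvPolynomial.mem_support_iff.mp hm ?_
  rw [← Finsupp.mapDomain_comapDomain _ Subtype.val_injective m hrange,
    ← MvPolynomial.coeff_killCompl Subtype.val_injective, ← faceHom_mk hG.1, h G hG,
    MvPolynomial.coeff_zero]

instance : IsReduced (SRRing k K) :=
  ⟨fun _ hr => eq_zero_of_forall_faceHom_eq_zero fun _ hG => (hr.map (faceHom k hG.1)).eq_zero⟩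

variable (k K G) in
/-- The algebra homomorphism `k[x_v : v ∈ G] → k[Δ]` mapping variables to variables; a section of
`faceHom` when `G` is a face. -/
noncomputable def faceIncl : MvPolynomial G k →ₐ[k] SRRing k K :=
  MvPolynomial.aeval fun v : G => srX k K v

theorem faceIncl_X (v : G) : faceIncl k K G (MvPolynomial.X v) = srX k K v :=
  MvPolynomial.aeval_X _ v

theorem faceHom_comp_faceIncl (hG : G ∈ K.faces) :
    (faceHom k hG).comp (faceIncl k K G) = AlgHom.id k _ :=
  MvPolynomial.algHom_ext fun v => by
    rw [AlgHom.comp_apply, faceIncl_X, faceHom_srX_of_mem hG v.2, AlgHom.id_apply]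

variable (k) in
/-- The prime ideal of a face, generated by the variables outside of the face. -/
noncomputable def facePrime (hG : G ∈ K.faces) : Ideal (SRRing k K) :=
  RingHom.ker (faceHom k hG)

instance (hG : G ∈ K.faces) : (facePrime k hG).IsPrime := RingHom.ker_isPrime _

theorem srX_mem_facePrime (hG : G ∈ K.faces) {v : V} : srX k K v ∈ facePrime k hG ↔ v ∉ G := by
  refine ⟨fun h hv => ?_, faceHom_srX_of_notMem hG⟩
  rw [facePrime, RingHom.mem_ker, faceHom_srX_of_mem hG hv] at h
  exact MvPolynomial.X_ne_zero _ h

theorem mk_faceIncl_faceHom (hG : G ∈ K.faces) {I : Ideal (SRRing k K)}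
    (h : ∀ v ∉ G, srX k K v ∈ I) (r : SRRing k K) :
    Ideal.Quotient.mk I (faceIncl k K G (faceHom k hG r)) = Ideal.Quotient.mk I r := by
  suffices heq : ((Ideal.Quotient.mkₐ k I).comp (faceIncl k K G)).comp (faceHom k hG) =
      Ideal.Quotient.mkₐ k I from AlgHom.congr_fun heq r
  refine srRing_algHom_ext (T := SRRing k K ⧸ I) fun v => ?_
  by_cases hv : v ∈ G
  · simp only [AlgHom.comp_apply, faceHom_srX_of_mem hG hv, faceIncl_X]
  · rw [AlgHom.comp_apply, faceHom_srX_of_notMem hG hv, map_zero]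
    exact (Ideal.Quotient.eq_zero_iff_mem.mpr (h v hv)).symm

theorem facePrime_le_iff (hG : G ∈ K.faces) {I : Ideal (SRRing k K)} :
    facePrime k hG ≤ I ↔ ∀ v ∉ G, srX k K v ∈ I := by
  refine ⟨fun h v hv => h ((srX_mem_facePrime hG).mpr hv), fun h r hr => ?_⟩
  rw [← Ideal.Quotient.eq_zero_iff_mem, ← mk_faceIncl_faceHom hG h, RingHom.mem_ker.mp hr, map_zero,
    map_zero]

theorem exists_isFacet_facePrime_le (p : Ideal (SRRing k K)) [hp : p.IsPrime] :
    ∃ (G : Finset V) (hG : K.IsFacet G), facePrime k hG.1 ≤ p := by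
  classical
  have hinf : (K.faces.attach.filter (K.IsFacet ·.1)).inf (fun G => facePrime k G.2) ≤ p := by
    intro r hr
    rw [Submodule.mem_finsetInf] at hr
    rw [eq_zero_of_forall_faceHom_eq_zero fun G hG => hr ⟨G, hG.1⟩ (by simp [hG])]
    exact p.zero_mem
  obtain ⟨G, hG, hle⟩ := (Ideal.IsPrime.inf_le' hp).mp hinf
  exact ⟨G.1, (mem_filter.mp hG).2, hle⟩

theorem height_comap_faceIncl_le (hG : G ∈ K.faces) {P : Ideal (SRRing k K)} [P.IsPrime]
    (hP : facePrime k hG ≤ P) : (P.comap (faceIncl k K G)).height ≤ P.height := by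
  have hcomap : (P.comap (faceIncl k K G)).comap (faceHom k hG) = P := by
    ext r
    rw [Ideal.mem_comap, Ideal.mem_comap, ← Ideal.Quotient.eq_zero_iff_mem,
      mk_faceIncl_faceHom hG ((facePrime_le_iff hG).mp hP), Ideal.Quotient.eq_zero_iff_mem]
  have hsurj : Function.Surjective (faceHom k hG) :=
    fun f => ⟨_, AlgHom.congr_fun (faceHom_comp_faceIncl hG) f⟩
  exact (height_le_height_comap_of_surjective (f := (faceHom k hG).toRingHom) hsurj _).trans_eq
    (congrArg Ideal.height hcomap)

theorem exists_isFacet_height_le_height_comap_faceIncl (P : Ideal (SRRing k K)) [P.IsPrime] :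
    ∃ (G : Finset V) (hG : K.IsFacet G), facePrime k hG.1 ≤ P ∧
      P.height ≤ (P.comap (faceIncl k K G)).height := by
  obtain ⟨Q, _, hQP, hQ⟩ := exists_isPrime_le_forall_height_le_height_comap P
  obtain ⟨G, hG, hGQ⟩ := exists_isFacet_facePrime_le Q
  refine ⟨G, hG, hGQ.trans hQP, hQ (faceIncl k K G).toRingHom fun x => ?_⟩
  obtain ⟨r, rfl⟩ := Ideal.Quotient.mk_surjective x
  exact ⟨_, mk_faceIncl_faceHom hG.1 ((facePrime_le_iff hG.1).mp hGQ) r⟩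

end Face

end SComplex

theorem comap_eq_comap_of_forall_sub_X_mem {k σ R : Type*} [CommRing k] [CommRing R] [Algebra k R]
    {f g : MvPolynomial σ k →ₐ[k] R} {P : Ideal R}
    (h : ∀ i, f (MvPolynomial.X i) - g (MvPolynomial.X i) ∈ P) : P.comap f = P.comap g := by
  have heq : (Ideal.Quotient.mkₐ k P).comp f = (Ideal.Quotient.mkₐ k P).comp g :=
    MvPolynomial.algHom_ext fun i => Ideal.Quotient.eq.mpr (h i)
  ext x
  rw [Ideal.mem_comap, Ideal.mem_comap, ← Ideal.Quotient.eq_zero_iff_mem,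
    ← Ideal.Quotient.eq_zero_iff_mem]
  exact Eq.congr_left (AlgHom.congr_fun heq x)

namespace SComplex

variable {V : Type} [DecidableEq V] {k : Type} [Field k] {K : SComplex V} {W : Finset V}

section Restrict

theorem mem_faces_restrict {F : Finset V} : F ∈ (K.restrict W).faces ↔ F ∈ K.faces ∧ F ⊆ W :=
  mem_filter

theorem IsFacet.exists_eq_inter_of_restrict {G : Finset V} (hG : (K.restrict W).IsFacet G) :
    ∃ H, K.IsFacet H ∧ G = H ∩ W := by
  obtain ⟨hGK, hGW⟩ := mem_faces_restrict.mp hG.1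
  obtain ⟨H, hH, hGH⟩ := exists_isFacet_superset hGK
  exact ⟨H, hH, hG.2 _ (mem_faces_restrict.mpr
    ⟨K.down_closed hH.1 inter_subset_left, inter_subset_right⟩) (subset_inter hGH hGW)⟩

theorem srX_restrict_of_notMem {v : V} (hv : v ∉ W) : srX k (K.restrict W) v = 0 :=
  srX_eq_zero fun h => hv (singleton_subset_iff.mp (mem_faces_restrict.mp h).2)

variable (k K W) in
/-- The inclusion `k[Δ_W] → k[Δ]` of the Stanley–Reisner ring of an induced subcomplex. -/
noncomputable def restrictIncl : SRRing k (K.restrict W) →ₐ[k] SRRing k K :=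
  srLift (fun v => if v ∈ W then srX k K v else 0) fun s hs => by
    by_cases hsW : s ⊆ W
    · rw [prod_congr rfl fun v hv => if_pos (hsW hv)]
      exact prod_srX_eq_zero fun h => hs (mem_faces_restrict.mpr ⟨h, hsW⟩)
    · obtain ⟨v, hvs, hvW⟩ := not_subset.mp hsW
      exact prod_eq_zero hvs (if_neg hvW)

theorem restrictIncl_srX_of_mem {v : V} (hv : v ∈ W) :
    restrictIncl k K W (srX k (K.restrict W) v) = srX k K v :=
  (srLift_srX _ _ v).trans (if_pos hv)

variable (k K W) in
/-- The retraction `k[Δ] → k[Δ_W]` of `restrictIncl`, killing the variables outside of `W`. -/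
noncomputable def restrictRetr : SRRing k K →ₐ[k] SRRing k (K.restrict W) :=
  srLift (srX k (K.restrict W)) fun _ hs =>
    prod_srX_eq_zero fun h => hs (mem_faces_restrict.mp h).1

theorem restrictRetr_comp_restrictIncl :
    (restrictRetr k K W).comp (restrictIncl k K W) = AlgHom.id k _ := by
  refine srRing_algHom_ext fun v => ?_
  by_cases hv : v ∈ W
  · rw [AlgHom.comp_apply, restrictIncl_srX_of_mem hv]
    exact srLift_srX _ _ v
  · rw [srX_restrict_of_notMem hv, map_zero, map_zero]

theorem exists_injective_srX_sub_srX_mem {P : Ideal (SRRing k K)} {G H : Finset V} (hGW : G ⊆ W)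
    (hcard : G.card = (H ∩ W).card) (hH : ∀ v ∉ H, srX k K v ∈ P)
    (hG : ∀ v ∈ W, v ∉ G → srX k K v ∈ P) :
    ∃ e : G → H, Function.Injective e ∧ ∀ v : G, srX k K v - srX k K (e v) ∈ P := by
  -- `e` fixes the vertices whose variable lies outside `P`; these belong to both `G` and `H`.
  have hmaps : Set.MapsTo Subtype.val {v : G | srX k K v ∉ P} ↑(H ∩ W) := fun v hv =>
    mem_inter.mpr ⟨by_contra fun hvH => hv (hH v hvH), hGW v.2⟩
  obtain ⟨e, he⟩ := hmaps.exists_equiv_extend_of_card_eq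
    (by rw [Fintype.card_coe, hcard]) Subtype.val_injective.injOn
  refine ⟨fun v => ⟨e v, mem_of_mem_inter_left (e v).2⟩, fun v w hvw =>
    e.injective (Subtype.ext (Subtype.mk.inj hvw)), fun v => ?_⟩
  by_cases hv : srX k K v ∈ P
  · refine P.sub_mem hv (by_contra fun hev => hev ?_)
    have hevG : (e v : V) ∈ G := by_contra fun hevG =>
      hev (hG _ (mem_of_mem_inter_right (e v).2) hevG)
    have hfix : e ⟨e v, hevG⟩ = e v := Subtype.ext (he ⟨e v, hevG⟩ hev)
    rwa [congrArg Subtype.val (e.injective hfix)]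
  · rw [he v hv, sub_self]
    exact P.zero_mem

theorem height_comap_restrictIncl_le
    (hcard : ∀ G H, K.IsFacet G → K.IsFacet H → (G ∩ W).card = (H ∩ W).card)
    (P : Ideal (SRRing k K)) [P.IsPrime] :
    (P.comap (restrictIncl k K W)).height ≤ P.height := by
  obtain ⟨H, hH, hHP⟩ := exists_isFacet_facePrime_le P
  obtain ⟨G, hG, hGP, hheight⟩ :=
    exists_isFacet_height_le_height_comap_faceIncl (P.comap (restrictIncl k K W))
  rw [facePrime_le_iff] at hGP
  have hGW : G ⊆ W := (mem_faces_restrict.mp hG.1).2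
  have hGH : G.card = (H ∩ W).card := by
    obtain ⟨G', hG', rfl⟩ := hG.exists_eq_inter_of_restrict
    exact hcard G' H hG' hH
  obtain ⟨e, he, heP⟩ := exists_injective_srX_sub_srX_mem hGW hGH
    ((facePrime_le_iff hH.1).mp hHP) fun v hvW hvG => by
      simpa only [Ideal.mem_comap, restrictIncl_srX_of_mem hvW] using hGP v hvG
  have hcomap : (P.comap (restrictIncl k K W)).comap (faceIncl k (K.restrict W) G) =
      (P.comap (faceIncl k K H)).comap (MvPolynomial.rename (R := k) e) := by
    rw [Ideal.comap_comapₐ, Ideal.comap_comapₐ]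
    refine comap_eq_comap_of_forall_sub_X_mem fun v => ?_
    simpa only [AlgHom.comp_apply, faceIncl_X, restrictIncl_srX_of_mem (hGW v.2),
      MvPolynomial.rename_X] using heP v
  calc (P.comap (restrictIncl k K W)).height
      ≤ ((P.comap (restrictIncl k K W)).comap (faceIncl k (K.restrict W) G)).height := hheight
    _ = ((P.comap (faceIncl k K H)).comap (MvPolynomial.rename (R := k) e)).height := by rw [hcomap]
    _ ≤ (P.comap (faceIncl k K H)).height := height_comap_le_of_flat (flat_rename he) _
    _ ≤ P.height := height_comap_faceIncl_le hH.1 hHP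

theorem SerreS.restrict {ℓ : ℕ} (hS : SerreS k ℓ K)
    (hcard : ∀ G H, K.IsFacet G → K.IsFacet H → (G ∩ W).card = (H ∩ W).card) :
    SerreS k ℓ (K.restrict W) := by
  algebraize [(restrictIncl k K W).toRingHom]
  have hretr (b : SRRing k (K.restrict W)) : restrictRetr k K W (restrictIncl k K W b) = b :=
    AlgHom.congr_fun restrictRetr_comp_restrictIncl b
  let r : SRRing k K →ₗ[SRRing k (K.restrict W)] SRRing k (K.restrict W) :=
    { restrictRetr k K W with
      map_smul' b x := (map_mul (restrictRetr k K W) _ x).trans (congrArg (· * _) (hretr b)) }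
  exact SerreCondS.of_retract r (LinearMap.ext hretr) (height_comap_restrictIncl_le hcard) hS

end Restrict

end SComplex

section NotDepthGETwo

variable {A : Type*} [CommRing A] {I J : Ideal A}

theorem mul_eq_zero_of_inf_eq_bot (hinf : I ⊓ J = ⊥) {a b : A} (ha : a ∈ I) (hb : b ∈ J) :
    a * b = 0 :=
  Ideal.mem_bot.mp (hinf ▸ Ideal.mul_le_inf (Ideal.mul_mem_mul ha hb))

theorem eq_bot_of_inf_eq_bot_of_add_mul_eq (hinf : I ⊓ J = ⊥) {a b c : A} (ha : a ∈ I) (hb : b ∈ J)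
    (hab : IsSMulRegular A (a + b)) (hc : IsUnit c) (h : (a + b) * c = a) : J = ⊥ := by
  have hbc : b * c = a * (1 - c) := by linear_combination h
  have hbc_mem : b * c ∈ I ⊓ J := ⟨hbc ▸ I.mul_mem_right _ ha, J.mul_mem_right _ hb⟩
  rw [hinf, Ideal.mem_bot, hc.mul_left_eq_zero] at hbc_mem
  subst hbc_mem
  refine (Submodule.eq_bot_iff _).mpr fun z hz => hab.right_eq_zero_of_smul ?_
  rw [add_zero, smul_eq_mul, mul_eq_zero_of_inf_eq_bot hinf ha hz]

/-- A form of Hartshorne's connectedness theorem: the punctured spectrum of a local ring of depth at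
least two is connected. -/
theorem not_depthGE_two [IsLocalRing A] (hsup : maximalIdeal A ≤ I ⊔ J) (hinf : I ⊓ J = ⊥)
    (hI : I ≠ ⊥) (hJ : J ≠ ⊥) : ¬ DepthGE A 2 A := by
  rintro ⟨rs, hlen, hmem, hreg⟩
  obtain ⟨x, y, rfl⟩ := List.length_eq_two.mp hlen
  obtain ⟨hx, hy⟩ := (isWeaklyRegular_cons_iff _ _ _).mp hreg
  rw [isWeaklyRegular_singleton_iff] at hy
  obtain ⟨x₁, hx₁, x₂, hx₂, rfl⟩ := Submodule.mem_sup.mp (hsup (hmem x (by simp)))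
  obtain ⟨y₁, hy₁, y₂, hy₂, rfl⟩ := Submodule.mem_sup.mp (hsup (hmem y (by simp)))
  have hyx : (y₁ + y₂) * x₁ = (x₁ + x₂) * y₁ := by
    linear_combination mul_eq_zero_of_inf_eq_bot hinf hx₁ hy₂ -
      mul_eq_zero_of_inf_eq_bot hinf hy₁ hx₂
  have hdvd : x₁ ∈ ((x₁ + x₂) • ⊤ : Submodule A A) := by
    rw [← Submodule.Quotient.mk_eq_zero]
    refine hy.right_eq_zero_of_smul ?_
    rw [← Submodule.Quotient.mk_smul, Submodule.Quotient.mk_eq_zero, smul_eq_mul, hyx]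
    exact Submodule.smul_mem_pointwise_smul _ _ _ trivial
  obtain ⟨c, -, hc⟩ := (Submodule.mem_smul_pointwise_iff_exists _ _ _).mp hdvd
  rw [smul_eq_mul] at hc
  rcases isUnit_or_isUnit_one_sub_self c with hunit | hunit
  · exact hJ (eq_bot_of_inf_eq_bot_of_add_mul_eq hinf hx₁ hx₂ hx hunit hc)
  · exact hI (eq_bot_of_inf_eq_bot_of_add_mul_eq (inf_comm I J ▸ hinf) hx₂ hx₁
      (add_comm x₁ x₂ ▸ hx) hunit (by linear_combination -hc))

end NotDepthGETwo

namespace SComplex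

variable {V : Type} [DecidableEq V] {k : Type} [Field k] {K : SComplex V} {F G : Finset V}

theorem mem_faces_link : G ∈ (K.link F).faces ↔ Disjoint F G ∧ F ∪ G ∈ K.faces := by
  rw [link, mem_filter]
  exact and_iff_right_of_imp fun h => K.down_closed h.2 subset_union_right

theorem singleton_mem_faces_link {v : V} :
    {v} ∈ (K.link F).faces ↔ v ∉ F ∧ insert v F ∈ K.faces := by
  rw [mem_faces_link, disjoint_singleton_right, union_singleton]

theorem facePrime_anti (hF : F ∈ K.faces) (hG : G ∈ K.faces) (h : F ⊆ G) :
    facePrime k hG ≤ facePrime k hF :=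
  (facePrime_le_iff hG).mpr fun _ hv => (srX_mem_facePrime hF).mpr fun hvF => hv (h hvF)

theorem facePrime_lt_of_ssubset (hF : F ∈ K.faces) (hG : G ∈ K.faces) (h : F ⊂ G) :
    facePrime k hG < facePrime k hF := by
  obtain ⟨v, hv, hvF⟩ := exists_of_ssubset h
  refine lt_of_le_of_ne (facePrime_anti hF hG h.1) fun heq => ?_
  exact (srX_mem_facePrime hG).mp (heq ▸ (srX_mem_facePrime hF).mpr hvF) hv

theorem le_height_facePrime {n : ℕ} (hF : F ∈ K.faces) (hG : G ∈ K.faces) (hFG : F ⊆ G)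
    (hcard : F.card + n ≤ G.card) : n ≤ (facePrime k hF).height := by
  induction n generalizing F with
  | zero => exact zero_le
  | succ n ih =>
    obtain ⟨v, hvG, hvF⟩ := exists_mem_notMem_of_card_lt_card (show F.card < G.card by lia)
    have hins : insert v F ⊆ G := insert_subset hvG hFG
    have hface : insert v F ∈ K.faces := K.down_closed hG hins
    calc ((n + 1 : ℕ) : ℕ∞) = n + 1 := Nat.cast_succ n
      _ ≤ (facePrime k hface).height + 1 := by
        gcongr
        exact ih hface hins (by rw [card_insert_of_notMem hvF]; lia)
      _ ≤ (facePrime k hF).height := Ideal.height_add_one_le_of_lt_of_isPrime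
        (facePrime_lt_of_ssubset hF hface (ssubset_insert hvF))

section Localization

variable (hF : F ∈ K.faces)

theorem prod_algebraMap_srX_eq_zero (hFG : Disjoint F G) (hG : G ∉ (K.link F).faces) :
    ∏ v ∈ G, algebraMap _ (Localization.AtPrime (facePrime k hF)) (srX k K v) = 0 := by
  have hunit : ∏ v ∈ F, srX k K v ∈ (facePrime k hF).primeCompl := fun hmem => by
    obtain ⟨v, hv, hvP⟩ := Ideal.IsPrime.prod_mem_iff.mp hmem
    exact (srX_mem_facePrime hF).mp hvP hv
  rw [← map_prod, IsLocalization.map_eq_zero_iff (facePrime k hF).primeCompl]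
  refine ⟨⟨_, hunit⟩, ?_⟩
  rw [← prod_union hFG]
  exact prod_srX_eq_zero fun h => hG (mem_faces_link.mpr ⟨hFG, h⟩)

theorem algebraMap_srX_ne_zero {v : V} (hv : {v} ∈ (K.link F).faces) :
    algebraMap _ (Localization.AtPrime (facePrime k hF)) (srX k K v) ≠ 0 := by
  obtain ⟨-, hG⟩ := singleton_mem_faces_link.mp hv
  rw [Ne, IsLocalization.map_eq_zero_iff (facePrime k hF).primeCompl]
  rintro ⟨⟨s, hs⟩, hsv⟩
  have hmem : s * srX k K v ∈ facePrime k hG := hsv ▸ Ideal.zero_mem _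
  rcases Ideal.IsPrime.mem_or_mem inferInstance hmem with hsP | hvP
  · exact hs (facePrime_anti hF hG (subset_insert v F) hsP)
  · exact (srX_mem_facePrime hG).mp hvP (mem_insert_self v F)

/-- By `not_depthGE_two`, applied to the ideals generated by the link vertices in `A` and by those
outside of `A`. -/
theorem SerreS.exists_pair_mem_faces_link {ℓ : ℕ} (hℓ : 2 ≤ ℓ) (hS : SerreS k ℓ K)
    (hheight : 2 ≤ (facePrime k hF).height) {A : Set V} {v w : V} (hv : {v} ∈ (K.link F).faces)
    (hvA : v ∈ A) (hw : {w} ∈ (K.link F).faces) (hwA : w ∉ A) :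
    ∃ a ∈ A, ∃ b ∉ A, {a, b} ∈ (K.link F).faces := by
  by_contra! hcon
  let φ (u : V) := algebraMap _ (Localization.AtPrime (facePrime k hF)) (srX k K u)
  let I (B : Set V) := Ideal.span (φ '' {u ∈ B | {u} ∈ (K.link F).faces})
  have hmem {B : Set V} {u : V} (huB : u ∈ B) (hu : {u} ∈ (K.link F).faces) : φ u ∈ I B :=
    Ideal.subset_span ⟨u, ⟨huB, hu⟩, rfl⟩
  have hbot {B : Set V} {u : V} (huB : u ∈ B) (hu : {u} ∈ (K.link F).faces) : I B ≠ ⊥ := fun h =>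
    algebraMap_srX_ne_zero hF hu (Ideal.mem_bot.mp (h ▸ hmem huB hu))
  have hmul : I A * I Aᶜ = ⊥ := by
    rw [Ideal.span_mul_span', Ideal.span_eq_bot]
    rintro _ ⟨_, ⟨a, ⟨haA, ha⟩, rfl⟩, _, ⟨b, ⟨hbA, hb⟩, rfl⟩, rfl⟩
    have hdisj : Disjoint F {a, b} :=
      disjoint_union_right.mpr ⟨(mem_faces_link.mp ha).1, (mem_faces_link.mp hb).1⟩
    have hab : a ≠ b := fun hab => hbA (hab ▸ haA)
    refine (prod_pair (f := φ) hab).symm.trans ?_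
    exact prod_algebraMap_srX_eq_zero hF hdisj (hcon a haA b hbA)
  have hinf : I A ⊓ I Aᶜ = ⊥ := (Submodule.eq_bot_iff _).mpr fun a ha =>
    IsReduced.eq_zero a ⟨2, Ideal.mem_bot.mp (hmul ▸ sq a ▸ Ideal.mul_mem_mul ha.1 ha.2)⟩
  have hsup : maximalIdeal _ ≤ I A ⊔ I Aᶜ := by
    rw [← IsLocalization.AtPrime.map_eq_maximalIdeal (facePrime k hF), Ideal.map_le_iff_le_comap,
      facePrime_le_iff]
    intro u huF
    by_cases hu : {u} ∈ (K.link F).faces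
    · by_cases huA : u ∈ A
      · exact Ideal.mem_sup_left (hmem huA hu)
      · exact Ideal.mem_sup_right (hmem huA hu)
    · have hzero := prod_algebraMap_srX_eq_zero (k := k) hF (disjoint_singleton_right.mpr huF) hu
      rw [prod_singleton] at hzero
      rw [Ideal.mem_comap, hzero]
      exact Ideal.zero_mem _
  exact not_depthGE_two hsup hinf (hbot hvA hv) (hbot hwA hw)
    (serreCondS_iff_depthGE.mp hS (facePrime k hF) 2 hℓ hheight)

end Localization

theorem IsFacet.card_lt_card_of_subset {G₁ G₂ : Finset V} (hG₁ : K.IsFacet G₁)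
    (hG₂ : G₂ ∈ K.faces) (hFG₁ : F ⊆ G₁) (hFG₂ : F ⊆ G₂) (hne : G₁ ≠ G₂) : F.card < G₁.card := by
  refine card_lt_card (hFG₁.ssubset_of_ne ?_)
  rintro rfl
  exact hne (hG₁.2 G₂ hG₂ hFG₂)

theorem SerreS.card_eq_of_isFacet_of_forall_insert {ℓ : ℕ} (hℓ : 2 ≤ ℓ) (hS : SerreS k ℓ K)
    (hinsert : ∀ v ∉ F, ∀ G₁ G₂, K.IsFacet G₁ → K.IsFacet G₂ → insert v F ⊆ G₁ → insert v F ⊆ G₂ →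
      G₁.card = G₂.card)
    {G₁ G₂ : Finset V} (hG₁ : K.IsFacet G₁) (hG₂ : K.IsFacet G₂) (hFG₁ : F ⊆ G₁) (hFG₂ : F ⊆ G₂) :
    G₁.card = G₂.card := by
  by_contra hne
  have hF := K.down_closed hG₁.1 hFG₁
  have hlt₁ := hG₁.card_lt_card_of_subset hG₂.1 hFG₁ hFG₂ (ne_of_apply_ne card hne)
  have hlt₂ := hG₂.card_lt_card_of_subset hG₁.1 hFG₂ hFG₁ (ne_of_apply_ne card (Ne.symm hne))
  obtain ⟨v₁, hv₁G, hv₁F⟩ := exists_mem_notMem_of_card_lt_card hlt₁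
  obtain ⟨v₂, hv₂G, hv₂F⟩ := exists_mem_notMem_of_card_lt_card hlt₂
  have hv₁ := insert_subset hv₁G hFG₁
  have hv₂ := insert_subset hv₂G hFG₂
  have hheight : 2 ≤ (facePrime k hF).height := by
    rcases lt_or_gt_of_ne hne with hlt | hlt
    · exact le_height_facePrime (n := 2) hF hG₂.1 hFG₂ (by lia)
    · exact le_height_facePrime (n := 2) hF hG₁.1 hFG₁ (by lia)
  obtain ⟨a, ⟨G, hG, haG, hcard⟩, b, hb, hab⟩ := hS.exists_pair_mem_faces_link hF hℓ hheight
    (A := {v | ∃ G, K.IsFacet G ∧ insert v F ⊆ G ∧ G.card = G₁.card})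
    (singleton_mem_faces_link.mpr ⟨hv₁F, K.down_closed hG₁.1 hv₁⟩) ⟨G₁, hG₁, hv₁, rfl⟩
    (singleton_mem_faces_link.mpr ⟨hv₂F, K.down_closed hG₂.1 hv₂⟩)
    fun ⟨G, hG, hvG, hcard⟩ =>
      hne (hcard.symm.trans (hinsert v₂ hv₂F G G₂ hG hG₂ hvG hv₂))
  obtain ⟨hdisj, hface⟩ := mem_faces_link.mp hab
  obtain ⟨H, hH, hsub⟩ := exists_isFacet_superset hface
  simp only [union_subset_iff, insert_subset_iff, singleton_subset_iff] at hsub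
  obtain ⟨hFH, haH, hbH⟩ := hsub
  have haF : a ∉ F := disjoint_right.mp hdisj (mem_insert_self a {b})
  have hHG : H.card = G.card := hinsert a haF H G hH hG (insert_subset haH hFH) haG
  exact hb ⟨H, hH, insert_subset hbH hFH, hHG.trans hcard⟩

theorem SerreS.card_eq_of_isFacet {ℓ : ℕ} (hℓ : 2 ≤ ℓ) (hS : SerreS k ℓ K) {G₁ G₂ : Finset V}
    (hG₁ : K.IsFacet G₁) (hG₂ : K.IsFacet G₂) (hFG₁ : F ⊆ G₁) (hFG₂ : F ⊆ G₂) :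
    G₁.card = G₂.card := by
  induction hn : K.rank - F.card using Nat.strong_induction_on generalizing F G₁ G₂ with
  | _ n ih =>
  subst hn
  refine hS.card_eq_of_isFacet_of_forall_insert hℓ (fun v hvF H₁ H₂ hH₁ hH₂ hvH₁ hvH₂ => ?_)
    hG₁ hG₂ hFG₁ hFG₂
  have hcard := card_insert_of_notMem hvF
  have hle : (insert v F).card ≤ K.rank := le_sup (K.down_closed hH₁.1 hvH₁)
  exact ih _ (by lia) hH₁ hH₂ hvH₁ hvH₂ rfl

theorem SerreS.pure {ℓ : ℕ} (hℓ : 2 ≤ ℓ) (hS : SerreS k ℓ K) : K.Pure := by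
  intro F hF
  obtain ⟨G, hG, hrank⟩ := K.faces.exists_mem_eq_sup ⟨F, hF.1⟩ Finset.card
  have hGfacet : K.IsFacet G := ⟨hG, fun H hH hGH =>
    eq_of_subset_of_card_le hGH ((le_sup (f := Finset.card) hH).trans_eq hrank)⟩
  exact (hS.card_eq_of_isFacet hℓ hF hGfacet (empty_subset F) (empty_subset G)).trans hrank.symm

end SComplex

theorem card_inter_biUnion_eq_sum {ι α : Type*} [Fintype ι] [DecidableEq α] {G : Finset α}
    {π : ι → Finset α} {a : ι → ℕ} (hcover : ∀ v ∈ G, ∃ i, v ∈ π i)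
    (hle : ∀ i, (G ∩ π i).card ≤ a i) (hcard : G.card = ∑ i, a i) (S : Finset ι) :
    (G ∩ S.biUnion π).card = ∑ i ∈ S, a i := by
  classical
  have hle_sum (T : Finset ι) : (G ∩ T.biUnion π).card ≤ ∑ i ∈ T, a i := by
    rw [inter_biUnion]
    exact card_biUnion_le.trans (sum_le_sum fun i _ => hle i)
  have hsub : G ⊆ (G ∩ S.biUnion π) ∪ (G ∩ Sᶜ.biUnion π) := fun v hv => by
    obtain ⟨i, hi⟩ := hcover v hv
    simp only [mem_union, mem_inter, mem_biUnion, mem_compl]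
    by_cases hiS : i ∈ S
    · exact Or.inl ⟨hv, i, hiS, hi⟩
    · exact Or.inr ⟨hv, i, hiS, hi⟩
  have hunion := (card_le_card hsub).trans (card_union_le _ _)
  have hsum := sum_add_sum_compl S a
  have hS := hle_sum S
  have hSc := hle_sum Sᶜ
  lia

/-- The hypotheses say that `K` is balanced of type `a` in the sense of Stanley; ordinary
balancedness is the case `a = 1`. -/
theorem rank_selection_serre_general {V : Type} [DecidableEq V] {k : Type} [Field k]
    {K : SComplex V} {ι : Type*} [Fintype ι] {π : ι → Finset V} {a : ι → ℕ}
    (hrank : K.rank = ∑ i, a i)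
    (hcover : ∀ v : V, ({v} : Finset V) ∈ K.faces → ∃ i, v ∈ π i)
    (hbal : ∀ F ∈ K.faces, ∀ i, (F ∩ π i).card ≤ a i)
    {ℓ : ℕ} (hserre : SComplex.SerreS k ℓ K) (S : Finset ι) :
    SComplex.SerreS k ℓ (K.restrict (S.biUnion π)) := by
  rcases Nat.lt_or_ge ℓ 2 with hℓ | hℓ
  · exact serreCondS_of_isReduced (Nat.le_of_lt_succ hℓ)
  have hcard (G : Finset V) (hG : K.IsFacet G) : (G ∩ S.biUnion π).card = ∑ i ∈ S, a i :=
    card_inter_biUnion_eq_sum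
      (fun v hv => hcover v (K.down_closed hG.1 (singleton_subset_iff.mpr hv)))
      (hbal G hG.1) ((hserre.pure hℓ G hG).trans hrank) S
  exact hserre.restrict fun G H hG hH => (hcard G hG).trans (hcard H hH).symm

/-- If the Stanley–Reisner ring of a balanced simplicial complex `(Δ, π)` of
dimension `d - 1` satisfies Serre's condition `(S_ℓ)`, then so does the Stanley–Reisner ring of
every rank selected subcomplex `Δ_S`, `S ⊆ [d]`. -/
theorem rank_selection_serre {V : Type} [DecidableEq V] (k : Type) [Field k]
    (K : SComplex V) (d : ℕ) (π : Fin d → Finset V)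
    (hrank : K.rank = d)
    (hdisj : ∀ i j : Fin d, i ≠ j → Disjoint (π i) (π j))
    (hcover : ∀ v : V, ({v} : Finset V) ∈ K.faces ↔ ∃ i, v ∈ π i)
    (hbal : ∀ F ∈ K.faces, ∀ i : Fin d, (F ∩ π i).card ≤ 1)
    (ℓ : ℕ) (hserre : SComplex.SerreS k ℓ K) (S : Finset (Fin d)) :
    SComplex.SerreS k ℓ (K.restrict (S.biUnion π)) :=
  rank_selection_serre_general (a := fun _ => 1) (by simpa using hrank) (fun v => (hcover v).mp)
    hbal hserre S
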